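/- arXiv:1806.05897 — 2 statements merged into one kernel-verified Lean document; each statement's English description precedes it below -/
import Mathlib

section
/- For duplicate-free lists π_A, π_B over the finite type α, the set π_A ⊕ π_B equals the set of all lists obtained by filtering some complete ranking p that has both π_A and π_B as sublists to the entries of entries(π_A) ∪ entries(π_B); in symbols, π_A ⊕ π_B = ( E(π_A) ∩ E(π_B) | entries(π_A) ∪ entries(π_B) ). -/
open scoped Classical

/-- `oplus πA πB` is the set of consistent combinations of `πA` and `πB`. -/
def oplus {α : Type*} [DecidableEq α] (πA πB : List α) : Set (List α) :=
  {m | m.Nodup ∧ (∀ x, x ∈ m ↔ x ∈ πA ∨ x ∈ πB) ∧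
    m.filter (fun x => decide (x ∈ πA)) = πA ∧
    m.filter (fun x => decide (x ∈ πB)) = πB}

/-!
A sublist of a duplicate-free list is determined by its entries, so consistent combinations of
`πA` and `πB` are the rankings of `entries(πA) ∪ entries(πB)` that extend both. Any such ranking
extends to a complete one, from which restriction to its entries recovers it; conversely,
restricting a common complete extension keeps `πA` and `πB` as subrankings.
-/

section

variable {α : Type*} {l p m : List α}

theorem sublist_filter_of_sublist {q : α → Bool} (h : l.Sublist p) (hq : ∀ x ∈ l, q x) :
    l.Sublist (p.filter q) := by
  simpa only [List.filter_eq_self.2 hq] using h.filter q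

theorem filter_mem_eq_iff_sublist [DecidablePred (· ∈ l)] (hp : p.Nodup) :
    p.filter (fun x => decide (x ∈ l)) = l ↔ l.Sublist p := by
  constructor
  · intro h
    simpa only [h] using List.filter_sublist (p := fun x => decide (x ∈ l)) (l := p)
  · intro h
    have sublist_filter : l.Sublist (p.filter (fun x => decide (x ∈ l))) :=
      sublist_filter_of_sublist h fun _ hx => decide_eq_true hx
    have filter_subperm : (p.filter (fun x => decide (x ∈ l))).Subperm l :=
      (hp.filter _).subperm fun _ hx => of_decide_eq_true (List.mem_filter.1 hx).2
    exact (sublist_filter.eq_of_length_le filter_subperm.length_le).symm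

theorem exists_complete_extension [Finite α] (hm : m.Nodup) :
    ∃ p : List α, p.Nodup ∧ (∀ x, x ∈ p) ∧ m.Sublist p := by
  obtain ⟨u, -, hu⟩ := Finite.exists_univ_list α
  exact ⟨u ∪ m, hm.union u, fun x => List.mem_union_left (hu x) m,
    (List.suffix_union_right u m).sublist⟩

theorem mem_oplus_iff_sublist [DecidableEq α] {πA πB : List α} :
    m ∈ oplus πA πB ↔
      m.Nodup ∧ (∀ x, x ∈ m ↔ x ∈ πA ∨ x ∈ πB) ∧ πA.Sublist m ∧ πB.Sublist m :=
  and_congr_right fun hm => and_congr_right fun _ =>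
    and_congr (filter_mem_eq_iff_sublist hm) (filter_mem_eq_iff_sublist hm)

end

/-- `πA ⊕ πB` equals the set of restrictions of the common linear
extensions of `πA` and `πB` to `entries(πA) ∪ entries(πB)`; in symbols,
`πA ⊕ πB = ( E(πA) ∩ E(πB) | entries(πA) ∪ entries(πB) )`. -/
theorem oplus_eq_restricted_extensions {α : Type*} [Fintype α] [DecidableEq α]
    (πA πB : List α) (hA : πA.Nodup) (hB : πB.Nodup) :
    oplus πA πB =
      {l | ∃ p : List α, p.Nodup ∧ (∀ x : α, x ∈ p) ∧
        πA.Sublist p ∧ πB.Sublist p ∧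
        l = p.filter (fun x => decide (x ∈ πA ∨ x ∈ πB))} := by
  ext m
  rw [mem_oplus_iff_sublist]
  constructor
  · rintro ⟨hm, mem_m, hAm, hBm⟩
    obtain ⟨p, hp, complete, hmp⟩ := exists_complete_extension hm
    refine ⟨p, hp, complete, hAm.trans hmp, hBm.trans hmp, ?_⟩
    simp only [← mem_m]
    exact ((filter_mem_eq_iff_sublist hp).2 hmp).symm
  · rintro ⟨p, hp, complete, hAp, hBp, rfl⟩
    exact ⟨hp.filter _,
      fun x => by simp only [List.mem_filter, complete, true_and, decide_eq_true_eq],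
      sublist_filter_of_sublist hAp fun _ hx => decide_eq_true (Or.inl hx),
      sublist_filter_of_sublist hBp fun _ hx => decide_eq_true (Or.inr hx)⟩
end

section
/- Let π_A ⇀ π_B be a consistent association rule (π_A ⊕ π_B ≠ ∅) with π_A, π_B duplicate-free lists, and let i ≠ j be two items that are both redundant in π_A ⇀ π_B. Then j is redundant in the rule π_A ⇀ (π_B.erase i); hence the elimination of one redundant item does not change the redundancy status of any other item. -/
/-!
Bubble sort turns a combination `m₀` of `πA` and `πB` into any combination `m` of `πA` and
`(πB.erase i).erase j` by exchanging adjacent items that `m` has in the opposite order. No exchange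
leaves `oplus πA πB`: the two items exchanged are not both in `πA` and not both in
`(πB.erase i).erase j`, on which the current list and `m` agree, so for `k = i` or `k = j` they are
not both in `πB.erase k` either. The exchange therefore stays within `oplus πA (πB.erase k)`, which
is `oplus πA πB` by redundancy of `k`.
-/

open scoped Classical

/-- An item `i ∈ entries(πB)` is redundant in the association rule
`πA ⇀ πB` if removing it from the consequent does not change the set of
consistent combinations. -/
def Redundant {α : Type*} [DecidableEq α] (πA πB : List α) (i : α) : Prop :=
  i ∈ πB ∧ oplus πA πB = oplus πA (πB.erase i)

section AdjacentSwaps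

variable {α : Type*}

open List

theorem cons_append_of_adjacent_swap {P : List α → Prop} {a : α} {s u : List α}
    (swap : ∀ s', ∀ b ∈ s, ∀ u', P (s' ++ b :: a :: u') → P (s' ++ a :: b :: u'))
    (h : P (s ++ a :: u)) : P (a :: (s ++ u)) := by
  induction s using reverseRecOn generalizing u with
  | nil => exact h
  | append_singleton s b ih =>
    rw [append_assoc] at h ⊢
    exact ih (fun s' c hc => swap s' c (mem_append_left _ hc)) (swap s b (by simp) u h)

theorem perm_induction_adjacent_swap {P : List α → Prop} {l m : List α} (hlm : l ~ m)
    (swap : ∀ s x y t, [y, x] <+ m → P (s ++ x :: y :: t) → P (s ++ y :: x :: t))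
    (hl : P l) : P m := by
  induction m generalizing P l with
  | nil => rwa [← hlm.eq_nil]
  | cons a m ih =>
    obtain ⟨s, u, rfl⟩ := append_of_mem (hlm.mem_iff.2 mem_cons_self)
    have hsu : s ++ u ~ m := (perm_middle.symm.trans hlm).cons_inv
    have front : P (a :: (s ++ u)) :=
      cons_append_of_adjacent_swap (fun s' b hb u' => swap s' b a u'
        ((singleton_sublist.2 (hsu.subset (mem_append_left u hb))).cons_cons a)) hl
    exact ih (P := fun l => P (a :: l)) hsu
      (fun s x y t hyx => swap (a :: s) x y t (hyx.cons a)) front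

theorem filter_append_swap {p : α → Bool} {x y : α} (hxy : ¬(p x ∧ p y)) (s t : List α) :
    (s ++ y :: x :: t).filter p = (s ++ x :: y :: t).filter p := by
  simp only [filter_append, filter_cons]
  grind

theorem not_pair_sublist_swap_of_nodup {l : List α} (hl : l.Nodup) {x y : α} (hxy : [x, y] <+ l) :
    ¬[y, x] <+ l := by
  intro hyx
  have heq : [x, y] = [y, x] := (hl.perm_iff_eq_of_sublist hxy hyx).1 (.swap y x [])
  have hne : x ≠ y := by simpa using hl.sublist hxy
  exact hne (cons.inj heq).1

end AdjacentSwaps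

section Oplus

variable {α : Type*} [DecidableEq α] {πA πB l m : List α} {i j x y : α}

open List

theorem nodup_right_of_mem_oplus (hm : m ∈ oplus πA πB) : πB.Nodup := by
  obtain ⟨hnodup, -, -, hfilter⟩ := hm
  exact hfilter ▸ hnodup.filter _

theorem perm_of_mem_oplus (hl : l ∈ oplus πA πB) (hm : m ∈ oplus πA πB) : l ~ m :=
  (perm_ext_iff_of_nodup hl.1 hm.1).2 fun x => (hl.2.1 x).trans (hm.2.1 x).symm

theorem pair_sublist_of_filter_mem_eq {π : List α}
    (hfilter : m.filter (fun z => decide (z ∈ π)) = π) (hx : x ∈ π) (hy : y ∈ π)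
    (hxy : [x, y] <+ m) : [x, y] <+ π := by
  have := hxy.filter (fun z => decide (z ∈ π))
  simpa only [hfilter, filter_cons, filter_nil, hx, hy, decide_true, if_true] using this

theorem not_mem_both_of_opposite_order {π : List α} (hm : m.Nodup)
    (hl_filter : l.filter (fun z => decide (z ∈ π)) = π)
    (hm_filter : m.filter (fun z => decide (z ∈ π)) = π)
    (hxy : [x, y] <+ l) (hyx : [y, x] <+ m) : ¬(x ∈ π ∧ y ∈ π) := by
  rintro ⟨hx, hy⟩
  have hπm : π <+ m := hm_filter ▸ filter_sublist
  exact not_pair_sublist_swap_of_nodup hm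
    ((pair_sublist_of_filter_mem_eq hl_filter hx hy hxy).trans hπm) hyx

theorem append_swap_mem_oplus {s t : List α} (hA : ¬(x ∈ πA ∧ y ∈ πA)) (hB : ¬(x ∈ πB ∧ y ∈ πB))
    (h : s ++ x :: y :: t ∈ oplus πA πB) : s ++ y :: x :: t ∈ oplus πA πB := by
  obtain ⟨hnodup, hmem, hfilterA, hfilterB⟩ := h
  have hperm : s ++ y :: x :: t ~ s ++ x :: y :: t := (Perm.swap x y t).append_left s
  refine ⟨hperm.nodup_iff.2 hnodup, fun z => hperm.mem_iff.trans (hmem z), ?_, ?_⟩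
  · rwa [filter_append_swap (by simpa using hA)]
  · rwa [filter_append_swap (by simpa using hB)]

theorem oplus_subset_oplus_erase (hi : i ∈ πA) : oplus πA πB ⊆ oplus πA (πB.erase i) := by
  intro m hm
  have hB : πB.Nodup := nodup_right_of_mem_oplus hm
  obtain ⟨hnodup, hmem, hfilterA, hfilterB⟩ := hm
  refine ⟨hnodup, fun x => ?_, hfilterA, ?_⟩
  · rw [hmem, hB.mem_erase_iff]
    grind
  · calc m.filter (fun x => decide (x ∈ πB.erase i))
        = (m.filter (fun x => decide (x ∈ πB))).filter (· != i) := by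
          rw [filter_filter]
          exact filter_congr fun x _ => by
            rw [Bool.eq_iff_iff]
            simp [hB.mem_erase_iff]
      _ = πB.erase i := by rw [hfilterB, hB.erase_eq_filter]

theorem Redundant.mem_left (hcons : (oplus πA πB).Nonempty) (hi : Redundant πA πB i) :
    i ∈ πA := by
  obtain ⟨m, hm⟩ := hcons
  have him : i ∈ m := (hm.2.1 i).2 (.inr hi.1)
  have hm' : m ∈ oplus πA (πB.erase i) := hi.2 ▸ hm
  exact ((hm'.2.1 i).1 him).resolve_right (nodup_right_of_mem_oplus hm).not_mem_erase

theorem Redundant.append_swap_mem {s t : List α} (hi : Redundant πA πB i)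
    (hA : ¬(x ∈ πA ∧ y ∈ πA)) (hB : ¬(x ∈ πB.erase i ∧ y ∈ πB.erase i))
    (h : s ++ x :: y :: t ∈ oplus πA πB) : s ++ y :: x :: t ∈ oplus πA πB := by
  rw [hi.2] at h ⊢
  exact append_swap_mem_oplus hA hB h

theorem oplus_erase_erase_subset (hcons : (oplus πA πB).Nonempty) (hi : Redundant πA πB i)
    (hj : Redundant πA πB j) : oplus πA ((πB.erase i).erase j) ⊆ oplus πA πB := by
  intro m hm
  have weaken : oplus πA πB ⊆ oplus πA ((πB.erase i).erase j) :=
    (oplus_subset_oplus_erase (hi.mem_left hcons)).trans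
      (oplus_subset_oplus_erase (hj.mem_left hcons))
  obtain ⟨m₀, hm₀⟩ := hcons
  have hB : πB.Nodup := nodup_right_of_mem_oplus hm₀
  refine perm_induction_adjacent_swap (P := (· ∈ oplus πA πB))
    (perm_of_mem_oplus (weaken hm₀) hm) (fun s x y t hyx hl => ?_) hm₀
  have hxy : [x, y] <+ s ++ x :: y :: t := by simp
  obtain ⟨-, -, hlA, hlC⟩ := weaken hl
  obtain ⟨hm_nodup, -, hmA, hmC⟩ := hm
  have hA : ¬(x ∈ πA ∧ y ∈ πA) := not_mem_both_of_opposite_order hm_nodup hlA hmA hxy hyx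
  have hC : ¬(x ∈ (πB.erase i).erase j ∧ y ∈ (πB.erase i).erase j) :=
    not_mem_both_of_opposite_order hm_nodup hlC hmC hxy hyx
  have h_erase : ¬(x ∈ πB.erase i ∧ y ∈ πB.erase i) ∨ ¬(x ∈ πB.erase j ∧ y ∈ πB.erase j) := by
    simp only [(hB.erase i).mem_erase_iff, hB.mem_erase_iff] at hC ⊢
    tauto
  exact h_erase.elim (hi.append_swap_mem hA · hl) (hj.append_swap_mem hA · hl)

end Oplus

theorem redundant_erase_of_redundant_general {α : Type*} [DecidableEq α] {πA πB : List α}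
    {i j : α} (hcons : (oplus πA πB).Nonempty) (hij : i ≠ j) (hi : Redundant πA πB i)
    (hj : Redundant πA πB j) : Redundant πA (πB.erase i) j := by
  refine ⟨(List.mem_erase_of_ne hij.symm).2 hj.1, Set.Subset.antisymm ?_ ?_⟩
  · exact oplus_subset_oplus_erase (hj.mem_left hcons)
  · rw [← hi.2]
    exact oplus_erase_erase_subset hcons hi hj

/-- eliminating one redundant item does not change the
redundancy status of any other item: if `i ≠ j` are both redundant in
`πA ⇀ πB`, then `j` is redundant in `πA ⇀ πB.erase i`. -/
theorem redundant_erase_of_redundant {α : Type*} [Fintype α] [DecidableEq α]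
    (πA πB : List α) (hA : πA.Nodup) (hB : πB.Nodup)
    (hcons : oplus πA πB ≠ ∅)
    (i j : α) (hij : i ≠ j)
    (hi : Redundant πA πB i) (hj : Redundant πA πB j) :
    Redundant πA (πB.erase i) j :=
  redundant_erase_of_redundant_general (Set.nonempty_iff_ne_empty.2 hcons) hij hi hj
end
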